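/- arXiv:1605.05625 — 3 statements merged into one kernel-verified Lean document; each statement's English description precedes it below -/
import Mathlib

section
/- Let M be a positive integer and let a : ℕ → ℂ be finitely supported. Then the sum over all primitive Dirichlet characters χ modulo M of |Σ_{n≥1} a(n)χ(n)|² is at most φ(M) · Σ_{c ∈ ℤ/Mℤ} |Σ_{n≥1, n ≡ c (mod M)} a(n)|², where φ is Euler's totient function. -/
open scoped Classical

/-!
Non-primitive characters only add nonnegative terms, so it suffices to bound the sum over all
characters. Grouping the series by residue classes turns it into `∑ u, A u * χ u` over the units
`u` modulo `M`, where `A c` is the sum over the class `c`; orthogonality of characters then gives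
the exact second moment `φ(M) * ∑ u, ‖A u‖ ^ 2`, and adding the non-unit classes yields the bound.
-/

open ComplexConjugate

theorem summable_ite_zero {ι E : Type*} [AddCommGroup E] [UniformSpace E] [IsUniformAddGroup E]
    [CompleteSpace E] {f : ι → E} (hf : Summable f) (p : ι → Prop) [DecidablePred p] :
    Summable fun i ↦ if p i then f i else 0 := by
  convert! hf.indicator {i | p i} using 2 with i
  simp [Set.indicator_apply]

theorem tsum_mul_comp_eq_sum_fiber {ι γ R : Type*} [Fintype γ] [DecidableEq γ]
    [NonUnitalNonAssocRing R] [UniformSpace R] [IsUniformAddGroup R] [CompleteSpace R] [T2Space R]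
    [IsTopologicalSemiring R] {f : ι → R} (hf : Summable f) (r : ι → γ) (g : γ → R) :
    ∑' i, f i * g (r i) = ∑ c, (∑' i, if r i = c then f i else 0) * g c := by
  have summable_fiber (c : γ) : Summable fun i ↦ if r i = c then f i else 0 :=
    summable_ite_zero hf (r · = c)
  calc ∑' i, f i * g (r i)
      = ∑' i, ∑ c, (if r i = c then f i else 0) * g c := by
        simp only [ite_mul, zero_mul, Fintype.sum_ite_eq]
    _ = ∑ c, ∑' i, (if r i = c then f i else 0) * g c :=
        Summable.tsum_finsetSum fun c _ ↦ (summable_fiber c).mul_right (g c)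
    _ = ∑ c, (∑' i, if r i = c then f i else 0) * g c :=
        Finset.sum_congr rfl fun c _ ↦ (summable_fiber c).tsum_mul_right (g c)

theorem sum_mul_mulChar_eq_sum_units {R R' : Type*} [CommMonoid R] [Fintype R] [Fintype Rˣ]
    [CommSemiring R'] (χ : MulChar R R') (A : R → R') :
    ∑ c, A c * χ c = ∑ u : Rˣ, A u * χ u :=
  .symm <| Fintype.sum_of_injective _ Units.val_injective _ _
    (fun c hc ↦ by rw [χ.map_nonunit hc, mul_zero]) fun _ ↦ rfl

theorem sum_units_le_sum {R N : Type*} [Monoid R] [Fintype R] [Fintype Rˣ] [AddCommMonoid N]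
    [PartialOrder N] [IsOrderedAddMonoid N] {f : R → N} (hf : ∀ c, 0 ≤ f c) :
    ∑ u : Rˣ, f u ≤ ∑ c, f c := by
  simpa only [Finset.sum_map] using!
    Finset.sum_le_univ_sum_of_nonneg hf (s := Finset.univ.map ⟨_, Units.val_injective (α := R)⟩)

section DirichletCharacter

variable {M : ℕ} [NeZero M]

theorem sum_char_mul_conj_char_eq (u v : (ZMod M)ˣ) :
    ∑ χ : DirichletCharacter ℂ M, χ u * conj (χ v) = if u = v then (M.totient : ℂ) else 0 := by
  have conj_eq (χ : DirichletCharacter ℂ M) : conj (χ v) = χ (v : ZMod M)⁻¹ := by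
    rw [starRingEnd_apply, MulChar.star_apply', MulChar.inv_apply, Ring.inverse_unit,
      ZMod.inv_coe_unit]
  simp only [conj_eq, mul_comm (DFunLike.coe _ (u : ZMod M)),
    DirichletCharacter.sum_char_inv_mul_char_eq ℂ v.isUnit, Units.val_inj, eq_comm]

theorem sum_norm_sq_sum_units_mul_char (A : (ZMod M)ˣ → ℂ) :
    ∑ χ : DirichletCharacter ℂ M, ‖∑ u, A u * χ u‖ ^ 2 = M.totient * ∑ u, ‖A u‖ ^ 2 := by
  apply Complex.ofReal_injective
  push_cast
  calc ∑ χ : DirichletCharacter ℂ M, (‖∑ u, A u * χ u‖ : ℂ) ^ 2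
      = ∑ χ : DirichletCharacter ℂ M, ∑ u, ∑ v, A u * conj (A v) * (χ u * conj (χ v)) := by
        simp only [← Complex.mul_conj', map_sum, map_mul, Finset.sum_mul_sum, mul_mul_mul_comm]
    _ = ∑ u, ∑ v, A u * conj (A v) * ∑ χ : DirichletCharacter ℂ M, χ u * conj (χ v) := by
        rw [Finset.sum_comm]
        simp only [Finset.mul_sum]
        exact Finset.sum_congr rfl fun u _ ↦ Finset.sum_comm
    _ = M.totient * ∑ u, (‖A u‖ : ℂ) ^ 2 := by
        simp only [sum_char_mul_conj_char_eq, mul_ite, mul_zero, Fintype.sum_ite_eq,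
          Complex.mul_conj', Finset.sum_mul, mul_comm (M.totient : ℂ)]

theorem sum_norm_sq_tsum_mul_char {ι : Type*} {a : ι → ℂ} (ha : Summable a) (r : ι → ZMod M) :
    ∑ χ : DirichletCharacter ℂ M, ‖∑' i, a i * χ (r i)‖ ^ 2 =
      M.totient * ∑ u : (ZMod M)ˣ, ‖∑' i, if r i = u then a i else 0‖ ^ 2 := by
  simp only [tsum_mul_comp_eq_sum_fiber ha r, sum_mul_mulChar_eq_sum_units,
    sum_norm_sq_sum_units_mul_char]

theorem second_moment_reduction_general {ι : Type*} {a : ι → ℂ} (ha : Summable a)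
    (p : ι → Prop) [DecidablePred p] (r : ι → ZMod M) :
    ∑ χ : DirichletCharacter ℂ M, ‖∑' i, if p i then a i * χ (r i) else 0‖ ^ 2 ≤
      M.totient * ∑ c : ZMod M, ‖∑' i, if p i ∧ r i = c then a i else 0‖ ^ 2 := by
  calc ∑ χ : DirichletCharacter ℂ M, ‖∑' i, if p i then a i * χ (r i) else 0‖ ^ 2
      = M.totient * ∑ u : (ZMod M)ˣ, ‖∑' i, if p i ∧ r i = u then a i else 0‖ ^ 2 := by
        simpa only [ite_mul, zero_mul, ← ite_and, and_comm (b := p _)] using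
          sum_norm_sq_tsum_mul_char (summable_ite_zero ha p) r
    _ ≤ M.totient * ∑ c : ZMod M, ‖∑' i, if p i ∧ r i = c then a i else 0‖ ^ 2 := by
        gcongr
        exact sum_units_le_sum
          (f := fun c : ZMod M ↦ ‖∑' i, if p i ∧ r i = c then a i else 0‖ ^ 2)
          fun c ↦ by positivity

end DirichletCharacter

/-- Second-moment reduction: the sum over primitive Dirichlet characters modulo `M` of the
squared modulus of a twisted sum is bounded by `φ(M)` times the sum over residue classes of
the squared modulus of the corresponding congruence sums. -/
theorem second_moment_reduction (M : ℕ) [NeZero M] (a : ℕ → ℂ)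
    (ha : (Function.support a).Finite) :
    ∑ χ : DirichletCharacter ℂ M,
      (if χ.IsPrimitive then ‖∑' n : ℕ, if 1 ≤ n then a n * χ (n : ZMod M) else 0‖ ^ 2 else 0)
    ≤ (Nat.totient M : ℝ) *
        ∑ c : ZMod M,
          ‖∑' n : ℕ, if 1 ≤ n ∧ ((n : ZMod M) = c) then a n else 0‖ ^ 2 := by
  exact (Finset.sum_le_sum fun χ _ ↦ by split_ifs <;> simp).trans
    (second_moment_reduction_general (summable_of_hasFiniteSupport ha) (1 ≤ ·) (Nat.cast ·))
end

section
/- For every integer ν ≥ 1 and every integer j ≥ 0 there is a constant C = C(ν,j) > 0 such that for all real x ≥ 1, |x^j · W_ν^{(j)}(x)| ≤ C (1+x)^{−1/2}, where W_ν^{(j)} denotes the j-th derivative of W_ν. -/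
open scoped Real

/-- The function `W_ν` appearing in the decomposition
`J_ν(x) = e^{ix} W_ν(x) + conj(e^{ix} W_ν(x))` of the Bessel function of the first kind. -/
noncomputable def besselW (ν : ℕ) (x : ℝ) : ℂ :=
  (Complex.exp (Complex.I * (Real.pi * ν / 2 - Real.pi / 4)) / Complex.Gamma ((ν : ℂ) + 1 / 2)) *
    (Real.sqrt (2 / (Real.pi * x)) : ℂ) *
    ∫ y in Set.Ioi (0 : ℝ),
      (Real.exp (-y) : ℂ) * ((y : ℂ) * (1 + Complex.I * (y : ℂ) / (2 * (x : ℂ)))) ^ ((ν : ℂ) - 1 / 2)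

/-!
`W_ν` extends holomorphically to the right half-plane, and on every sector `|arg z| ≤ θ < π / 2`,
away from the origin, the extension is `O(|z|^{-1/2})`: there `1 + iy/(2z)` is bounded below by
`cos θ` and above by a multiple of `1 + y`, so the integral is dominated, uniformly in `z`, by a
convergent Gamma-type integral. The disc `|z - x| ≤ x / 2` lies in such a sector, and Cauchy's
estimate on it gains a factor `2 / x` for each derivative.
-/

open MeasureTheory Set Filter Topology Metric

section Rpow

lemma rpow_le_rpow_abs {t R : ℝ} (ht : 0 < t) (hRt : R⁻¹ ≤ t) (htR : t ≤ R) (s : ℝ) :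
    t ^ s ≤ R ^ |s| := by
  have hR : 0 < R := ht.trans_le htR
  rcases le_total 0 s with hs | hs
  · rw [abs_of_nonneg hs]
    exact Real.rpow_le_rpow ht.le htR hs
  · rw [abs_of_nonpos hs, Real.rpow_neg hR.le, ← Real.inv_rpow hR.le]
    exact Real.rpow_le_rpow_of_nonpos (inv_pos.2 hR) hRt hs

lemma one_add_rpow_le {y p : ℝ} (hy : 0 ≤ y) (hp : 0 ≤ p) :
    (1 + y) ^ p ≤ 2 ^ p * (1 + y ^ p) := by
  have hyp : 0 ≤ y ^ p := Real.rpow_nonneg hy p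
  have hmax : max 1 y ^ p ≤ 1 + y ^ p := by
    rcases max_choice 1 y with h | h <;> rw [h]
    · simpa only [Real.one_rpow] using le_add_of_nonneg_right hyp
    · exact le_add_of_nonneg_left zero_le_one
  calc (1 + y) ^ p ≤ (2 * max 1 y) ^ p := by
        gcongr
        linarith [le_max_left 1 y, le_max_right 1 y]
    _ = 2 ^ p * max 1 y ^ p := Real.mul_rpow zero_le_two (by positivity)
    _ ≤ 2 ^ p * (1 + y ^ p) := by gcongr

lemma integrableOn_exp_neg_mul_rpow_mul_one_add_rpow {s p : ℝ} (hs : -1 < s) (hp : 0 ≤ p) :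
    IntegrableOn (fun y : ℝ ↦ Real.exp (-y) * y ^ s * (1 + y) ^ p) (Ioi 0) := by
  have hGamma {q : ℝ} (hq : -1 < q) : IntegrableOn (fun y : ℝ ↦ Real.exp (-y) * y ^ q) (Ioi 0) := by
    simpa only [add_sub_cancel_right] using
      Real.GammaIntegral_convergent (neg_lt_iff_pos_add.1 hq)
  have hdom : IntegrableOn
      (fun y : ℝ ↦ 2 ^ p * (Real.exp (-y) * y ^ s + Real.exp (-y) * y ^ (s + p))) (Ioi 0) :=
    ((hGamma hs).add (hGamma (q := s + p) (by linarith))).const_mul _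
  refine hdom.mono' (by fun_prop) ?_
  filter_upwards [ae_restrict_mem measurableSet_Ioi] with y hy
  have hy : 0 < y := hy
  rw [Real.norm_of_nonneg (by positivity)]
  calc Real.exp (-y) * y ^ s * (1 + y) ^ p
      ≤ Real.exp (-y) * y ^ s * (2 ^ p * (1 + y ^ p)) := by
        gcongr
        exact one_add_rpow_le hy.le hp
    _ = 2 ^ p * (Real.exp (-y) * y ^ s + Real.exp (-y) * y ^ (s + p)) := by
        rw [Real.rpow_add hy]
        ring

lemma norm_cpow_le_exp_mul_rpow (w a : ℂ) :
    ‖w ^ a‖ ≤ Real.exp (π * |a.im|) * ‖w‖ ^ a.re := by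
  have harg : -(w.arg * a.im) ≤ π * |a.im| :=
    calc -(w.arg * a.im) ≤ |w.arg * a.im| := neg_le_abs _
      _ = |w.arg| * |a.im| := abs_mul _ _
      _ ≤ π * |a.im| := by
        gcongr
        exact Complex.abs_arg_le_pi w
  calc ‖w ^ a‖ ≤ ‖w‖ ^ a.re / Real.exp (w.arg * a.im) := Complex.norm_cpow_le w a
    _ = Real.exp (-(w.arg * a.im)) * ‖w‖ ^ a.re := by rw [Real.exp_neg, div_eq_inv_mul]
    _ ≤ Real.exp (π * |a.im|) * ‖w‖ ^ a.re := by gcongr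

lemma rpow_le_mul_one_add_rpow {δ x s : ℝ} (hδ : 0 < δ) (hx : δ ≤ x) (hs : s ≤ 0) :
    x ^ s ≤ (δ / (1 + δ)) ^ s * (1 + x) ^ s := by
  have hx0 : 0 < x := hδ.trans_le hx
  have hcompare : δ / (1 + δ) * (1 + x) ≤ x := by
    rw [div_mul_eq_mul_div, div_le_iff₀ (by positivity)]
    linarith
  rw [← Real.mul_rpow (by positivity) (by positivity)]
  exact Real.rpow_le_rpow_of_nonpos (by positivity) hcompare hs

end Rpow

section Holomorphic

lemma aestronglyMeasurable_deriv_of_eventually {α 𝕜 E : Type*} [MeasurableSpace α] {μ : Measure α}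
    [NontriviallyNormedField 𝕜] [NormedAddCommGroup E] [NormedSpace 𝕜 E]
    {F : 𝕜 → α → E} {z : 𝕜} (hmeas : ∀ᶠ w in 𝓝 z, AEStronglyMeasurable (F w) μ)
    (hdiff : ∀ᵐ a ∂μ, DifferentiableAt 𝕜 (F · a) z) :
    AEStronglyMeasurable (fun a ↦ deriv (F · a) z) μ := by
  obtain ⟨u, hu, hmeas_u⟩ : ∃ u : ℕ → 𝕜, Tendsto u atTop (𝓝[≠] z) ∧
      ∀ n, AEStronglyMeasurable (F (u n)) μ :=
    exists_seq_forall_of_frequently (hmeas.filter_mono nhdsWithin_le_nhds).frequently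
  refine aestronglyMeasurable_of_tendsto_ae atTop (f := fun n a ↦ slope (F · a) z (u n))
    (fun n ↦ ((hmeas_u n).sub hmeas.self_of_nhds).const_smul (u n - z)⁻¹) ?_
  filter_upwards [hdiff] with a ha
  exact ha.hasDerivAt.tendsto_slope.comp hu

variable {E : Type*} [NormedAddCommGroup E] [NormedSpace ℂ E] {U : Set ℂ}

theorem differentiableOn_integral_of_dominated {α : Type*} [MeasurableSpace α] {μ : Measure α}
    {F : ℂ → α → E} {bound : α → ℝ} (hU : IsOpen U)
    (hmeas : ∀ z ∈ U, AEStronglyMeasurable (F z) μ)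
    (hdiff : ∀ᵐ a ∂μ, DifferentiableOn ℂ (F · a) U)
    (hbound : ∀ᵐ a ∂μ, ∀ z ∈ U, ‖F z a‖ ≤ bound a) (hint : Integrable bound μ) :
    DifferentiableOn ℂ (fun z ↦ ∫ a, F z a ∂μ) U := by
  intro z hz
  obtain ⟨r, hr, hrU⟩ := nhds_basis_closedBall.mem_iff.1 (hU.mem_nhds hz)
  have hball {w : ℂ} (hw : w ∈ ball z (r / 2)) : closedBall w (r / 2) ⊆ U :=
    (closedBall_subset_closedBall' (by linarith [mem_ball.1 hw])).trans hrU
  have hmeas_nhds : ∀ᶠ w in 𝓝 z, AEStronglyMeasurable (F w) μ :=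
    (hU.eventually_mem hz).mono hmeas
  have hdiff_ball : ∀ᵐ a ∂μ, ∀ w ∈ ball z (r / 2), DifferentiableAt ℂ (F · a) w := by
    filter_upwards [hdiff] with a ha w hw
    exact ha.differentiableAt (hU.mem_nhds (hball hw (mem_closedBall_self (by positivity))))
  have hderiv_bound : ∀ᵐ a ∂μ, ∀ w ∈ ball z (r / 2), ‖deriv (F · a) w‖ ≤ bound a / (r / 2) := by
    filter_upwards [hdiff, hbound] with a hda hba w hw
    exact Complex.norm_deriv_le_of_forall_mem_sphere_norm_le (half_pos hr)
      (hda.diffContOnCl_ball (hball hw))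
      fun v hv ↦ hba v (hball hw (sphere_subset_closedBall hv))
  have hderiv := hasDerivAt_integral_of_dominated_loc_of_deriv_le
    (F' := fun w a ↦ deriv (F · a) w) (ball_mem_nhds z (half_pos hr)) hmeas_nhds
    (hint.mono' (hmeas z hz) (hbound.mono fun a ha ↦ ha z hz))
    (aestronglyMeasurable_deriv_of_eventually hmeas_nhds
      (hdiff_ball.mono fun a ha ↦ ha z (mem_ball_self (half_pos hr))))
    hderiv_bound (hint.div_const _)
    (hdiff_ball.mono fun a ha w hw ↦ (ha w hw).hasDerivAt)
  exact hderiv.2.differentiableAt.differentiableWithinAt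

variable [CompleteSpace E] {f : ℂ → E}

lemma differentiableOn_iteratedDeriv (hU : IsOpen U) (hf : DifferentiableOn ℂ f U) (n : ℕ) :
    DifferentiableOn ℂ (iteratedDeriv n f) U := by
  induction n with
  | zero => rwa [iteratedDeriv_zero]
  | succ n ih =>
    rw [iteratedDeriv_succ]
    exact ih.deriv hU

lemma iteratedDeriv_comp_ofReal (hU : IsOpen U) (hf : DifferentiableOn ℂ f U) (n : ℕ) {x : ℝ}
    (hx : (x : ℂ) ∈ U) : iteratedDeriv n (fun t : ℝ ↦ f t) x = iteratedDeriv n f x := by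
  induction n generalizing x with
  | zero => simp only [iteratedDeriv_zero]
  | succ n ih =>
    have hev : iteratedDeriv n (fun t : ℝ ↦ f t) =ᶠ[𝓝 x] fun t : ℝ ↦ iteratedDeriv n f t := by
      filter_upwards [Complex.continuous_ofReal.continuousAt.eventually (hU.mem_nhds hx)]
        with t ht using ih ht
    have hderiv := ((differentiableOn_iteratedDeriv hU hf n).differentiableAt
      (hU.mem_nhds hx)).hasDerivAt
    rw [iteratedDeriv_succ, iteratedDeriv_succ, hev.deriv_eq]
    exact (hderiv.scomp x Complex.ofRealCLM.hasDerivAt).deriv.trans (one_smul ℂ _)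

theorem norm_pow_smul_iteratedDeriv_le {z : ℂ} (hz : z ≠ 0) {B s : ℝ}
    (hf : DiffContOnCl ℂ f (ball z (‖z‖ / 2)))
    (hB : ∀ w ∈ sphere z (‖z‖ / 2), ‖f w‖ ≤ B * ‖w‖ ^ s) (n : ℕ) :
    ‖z ^ n • iteratedDeriv n f z‖ ≤ n.factorial * 2 ^ n * 2 ^ |s| * B * ‖z‖ ^ s := by
  have hzn : 0 < ‖z‖ := norm_pos_iff.2 hz
  have hsphere : ∀ w ∈ sphere z (‖z‖ / 2), ‖f w‖ ≤ 2 ^ |s| * B * ‖z‖ ^ s := by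
    intro w hw
    have hdist : |‖w‖ - ‖z‖| ≤ ‖z‖ / 2 := (abs_norm_sub_norm_le w z).trans_eq (by simpa using hw)
    obtain ⟨hlow, hupp⟩ := abs_le.1 hdist
    have hwn : 0 < ‖w‖ := by linarith
    have hB0 : 0 ≤ B :=
      (mul_nonneg_iff_of_pos_right (Real.rpow_pos_of_pos hwn s)).1 ((norm_nonneg _).trans (hB w hw))
    have hratio : (‖w‖ / ‖z‖) ^ s ≤ 2 ^ |s| := by
      refine rpow_le_rpow_abs (div_pos hwn hzn) ?_ ?_ s
      · rw [le_div_iff₀ hzn]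
        linarith
      · rw [div_le_iff₀ hzn]
        linarith
    rw [Real.div_rpow hwn.le hzn.le, div_le_iff₀ (Real.rpow_pos_of_pos hzn s)] at hratio
    calc ‖f w‖ ≤ B * ‖w‖ ^ s := hB w hw
      _ ≤ B * (2 ^ |s| * ‖z‖ ^ s) := by gcongr
      _ = 2 ^ |s| * B * ‖z‖ ^ s := by ring
  calc ‖z ^ n • iteratedDeriv n f z‖ = ‖z‖ ^ n * ‖iteratedDeriv n f z‖ := by
        rw [norm_smul, norm_pow]
    _ ≤ ‖z‖ ^ n * (n.factorial * (2 ^ |s| * B * ‖z‖ ^ s) / (‖z‖ / 2) ^ n) := by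
        gcongr
        exact Complex.norm_iteratedDeriv_le_of_forall_mem_sphere_norm_le n (half_pos hzn) hf hsphere
    _ = n.factorial * 2 ^ n * 2 ^ |s| * B * ‖z‖ ^ s := by
        rw [div_pow]
        field_simp

end Holomorphic

/-- The part of a sector about the positive real axis that lies away from the origin. The parameter
`R` controls both the aperture and the distance to the origin; the set grows with `R` and is empty
for `R ≤ 1`. -/
def truncatedSector (R : ℝ) : Set ℂ := {z | 1 < R * ‖z‖ ∧ ‖z‖ < R * z.re}

namespace truncatedSector

variable {R : ℝ} {z : ℂ}

protected lemma isOpen (R : ℝ) : IsOpen (truncatedSector R) :=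
  (isOpen_lt (f := fun _ ↦ (1 : ℝ)) (g := fun z : ℂ ↦ R * ‖z‖) (by fun_prop) (by fun_prop)).inter
    (isOpen_lt (f := fun z : ℂ ↦ ‖z‖) (g := fun z ↦ R * z.re) (by fun_prop) (by fun_prop))

lemma pos_param (hz : z ∈ truncatedSector R) : 0 < R :=
  pos_of_mul_pos_left (one_pos.trans hz.1) (norm_nonneg z)

lemma re_pos (hz : z ∈ truncatedSector R) : 0 < z.re :=
  pos_of_mul_pos_right ((norm_nonneg z).trans_lt hz.2) (pos_param hz).le

lemma norm_pos (hz : z ∈ truncatedSector R) : 0 < ‖z‖ :=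
  (re_pos hz).trans_le (Complex.re_le_norm z)

lemma one_lt_param (hz : z ∈ truncatedSector R) : 1 < R := by
  by_contra! hR
  have h1 : R * z.re ≤ z.re := mul_le_of_le_one_left (re_pos hz).le hR
  exact (hz.2.trans_le h1).not_ge (Complex.re_le_norm z)

lemma closedBall_subset {x : ℝ} (hx : 0 < x) (hR : 3 < R) (hRx : 2 < R * x) :
    closedBall (x : ℂ) (x / 2) ⊆ truncatedSector R := by
  intro w hw
  have hw : ‖(x : ℂ) - w‖ ≤ x / 2 := by rwa [mem_closedBall, dist_comm, dist_eq_norm] at hw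
  have hre : x / 2 ≤ w.re := by
    have := (Complex.re_le_norm (x - w)).trans hw
    rw [Complex.sub_re, Complex.ofReal_re] at this
    linarith
  have hnorm : ‖w‖ ≤ 3 * (x / 2) := by
    have := norm_sub_norm_le w x
    rw [norm_sub_rev, Complex.norm_of_nonneg hx.le] at this
    linarith
  constructor
  · calc 1 < R * (x / 2) := by linarith
      _ ≤ R * ‖w‖ := by
        gcongr
        exact hre.trans (Complex.re_le_norm w)
  · calc ‖w‖ ≤ 3 * (x / 2) := hnorm
      _ < R * (x / 2) := by gcongr
      _ ≤ R * w.re := by gcongr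

end truncatedSector

/-- The integrand of `besselW`, with the exponent `ν - 1/2` and the variable `x` replaced by complex
numbers `a` and `z`. -/
noncomputable def besselWIntegrand (a z : ℂ) (y : ℝ) : ℂ :=
  (Real.exp (-y) : ℂ) * ((y : ℂ) * (1 + Complex.I * (y : ℂ) / (2 * z))) ^ a

section Integrand

variable {a z : ℂ} {y R : ℝ}

lemma measurable_besselWIntegrand (a z : ℂ) : Measurable (besselWIntegrand a z) := by
  unfold besselWIntegrand
  fun_prop

lemma mul_one_add_I_mul_div_mem_slitPlane (hz : 0 < z.re) (hy : y ≠ 0) :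
    (y : ℂ) * (1 + Complex.I * y / (2 * z)) ∈ Complex.slitPlane := by
  have hz0 : z ≠ 0 := by rintro rfl; exact hz.false
  have hsq : (y : ℂ) * (1 + Complex.I * y / (2 * z)) =
      y + ((y ^ 2 / 2 : ℝ) : ℂ) * (Complex.I * z⁻¹) := by
    push_cast
    field_simp
  have him : ((y : ℂ) * (1 + Complex.I * y / (2 * z))).im =
      y ^ 2 / 2 * (z.re / Complex.normSq z) := by
    rw [hsq, Complex.add_im, Complex.ofReal_im, Complex.im_ofReal_mul, Complex.I_mul_im,
      Complex.inv_re, zero_add]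
  have hnormSq : 0 < Complex.normSq z := Complex.normSq_pos.2 hz0
  refine Complex.mem_slitPlane_iff.2 (Or.inr ?_)
  rw [him]
  positivity

lemma differentiableAt_besselWIntegrand (a : ℂ) (hz : 0 < z.re) (hy : y ≠ 0) :
    DifferentiableAt ℂ (besselWIntegrand a · y) z := by
  have hz0 : 2 * z ≠ 0 := mul_ne_zero two_ne_zero (by rintro rfl; exact hz.false)
  have hbase : DifferentiableAt ℂ (fun w : ℂ ↦ (y : ℂ) * (1 + Complex.I * y / (2 * w))) z := by
    fun_prop (disch := exact hz0)
  exact (hbase.cpow_const (mul_one_add_I_mul_div_mem_slitPlane hz hy)).const_mul _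

lemma inv_le_norm_one_add_I_mul_div (hz : z ∈ truncatedSector R) (y : ℝ) :
    R⁻¹ ≤ ‖1 + Complex.I * y / (2 * z)‖ := by
  have hR := truncatedSector.pos_param hz
  have hzn := truncatedSector.norm_pos hz
  have hz0 : z ≠ 0 := norm_pos_iff.1 hzn
  have hfactor : 1 + Complex.I * y / (2 * z) = (z + Complex.I * y / 2) / z := by field_simp
  have hre : z.re ≤ ‖z + Complex.I * y / 2‖ := by
    refine le_of_eq_of_le ?_ (Complex.re_le_norm _)
    simp
  rw [hfactor, norm_div, inv_le_iff_one_le_mul₀' hR, mul_div_assoc', one_le_div hzn]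
  exact hz.2.le.trans (by gcongr)

lemma norm_one_add_I_mul_div_le (hz : z ∈ truncatedSector R) (hy : 0 ≤ y) :
    ‖1 + Complex.I * y / (2 * z)‖ ≤ R * (1 + y) := by
  have hR := truncatedSector.one_lt_param hz
  have hzn := truncatedSector.norm_pos hz
  calc ‖1 + Complex.I * y / (2 * z)‖ ≤ 1 + y / (2 * ‖z‖) := by
        refine (norm_add_le _ _).trans_eq ?_
        simp [abs_of_nonneg hy]
    _ ≤ 1 + R * y := by
        gcongr
        rw [div_le_iff₀ (by positivity)]
        nlinarith [mul_nonneg hy (sub_nonneg.2 hz.1.le)]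
    _ ≤ R * (1 + y) := by linarith

lemma norm_besselWIntegrand_le (a : ℂ) (hz : z ∈ truncatedSector R) (hy : 0 ≤ y) :
    ‖besselWIntegrand a z y‖ ≤ Real.exp (π * |a.im|) * R ^ |a.re| *
      (Real.exp (-y) * y ^ a.re * (1 + y) ^ |a.re|) := by
  have hR := truncatedSector.pos_param hz
  have hlow := inv_le_norm_one_add_I_mul_div hz y
  have hpow : ‖1 + Complex.I * y / (2 * z)‖ ^ a.re ≤ R ^ |a.re| * (1 + y) ^ |a.re| := by
    rw [← Real.mul_rpow hR.le (by positivity)]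
    refine rpow_le_rpow_abs ((inv_pos.2 hR).trans_le hlow) (le_trans ?_ hlow)
      (norm_one_add_I_mul_div_le hz hy) _
    gcongr
    exact le_mul_of_one_le_right hR.le (by linarith)
  calc ‖besselWIntegrand a z y‖
      = Real.exp (-y) * ‖((y : ℂ) * (1 + Complex.I * y / (2 * z))) ^ a‖ := by
        rw [besselWIntegrand, norm_mul, Complex.norm_of_nonneg (Real.exp_pos _).le]
    _ ≤ Real.exp (-y) * (Real.exp (π * |a.im|) *
          (y ^ a.re * ‖1 + Complex.I * y / (2 * z)‖ ^ a.re)) := by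
        gcongr
        refine (norm_cpow_le_exp_mul_rpow _ a).trans_eq ?_
        rw [norm_mul, Complex.norm_of_nonneg hy, Real.mul_rpow hy (norm_nonneg _)]
    _ ≤ Real.exp (-y) * (Real.exp (π * |a.im|) *
          (y ^ a.re * (R ^ |a.re| * (1 + y) ^ |a.re|))) := by gcongr
    _ = _ := by ring

lemma differentiableOn_integral_besselWIntegrand (ha : -1 < a.re) (R : ℝ) :
    DifferentiableOn ℂ (fun z ↦ ∫ y in Ioi (0 : ℝ), besselWIntegrand a z y)
      (truncatedSector R) := by
  refine differentiableOn_integral_of_dominated (truncatedSector.isOpen R)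
    (fun z _ ↦ (measurable_besselWIntegrand a z).aestronglyMeasurable) ?_ ?_
    ((integrableOn_exp_neg_mul_rpow_mul_one_add_rpow ha (abs_nonneg a.re)).const_mul
      (Real.exp (π * |a.im|) * R ^ |a.re|))
  · filter_upwards [ae_restrict_mem measurableSet_Ioi] with y hy z hz
    exact (differentiableAt_besselWIntegrand a (truncatedSector.re_pos hz)
      (ne_of_gt hy)).differentiableWithinAt
  · filter_upwards [ae_restrict_mem measurableSet_Ioi] with y hy z hz
    exact norm_besselWIntegrand_le a hz (le_of_lt hy)

lemma exists_norm_integral_besselWIntegrand_le (ha : -1 < a.re) (R : ℝ) :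
    ∃ B, ∀ z ∈ truncatedSector R, ‖∫ y in Ioi (0 : ℝ), besselWIntegrand a z y‖ ≤ B := by
  refine ⟨_, fun z hz ↦ norm_integral_le_of_norm_le
    ((integrableOn_exp_neg_mul_rpow_mul_one_add_rpow ha (abs_nonneg a.re)).const_mul
      (Real.exp (π * |a.im|) * R ^ |a.re|)) ?_⟩
  filter_upwards [ae_restrict_mem measurableSet_Ioi] with y hy
  exact norm_besselWIntegrand_le a hz (le_of_lt hy)

end Integrand

/-- The extension of `besselW` to complex order and complex argument. It is the intended holomorphic
function for `-1/2 < ν.re` and `0 < z.re`. -/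
noncomputable def besselWComplex (ν z : ℂ) : ℂ :=
  Complex.exp (Complex.I * (π * ν / 2 - π / 4)) / Complex.Gamma (ν + 1 / 2) *
    (2 / (π * z)) ^ (1 / 2 : ℂ) * ∫ y in Ioi (0 : ℝ), besselWIntegrand (ν - 1 / 2) z y

section BesselW

variable {ν : ℂ}

lemma besselWComplex_ofReal (ν : ℕ) {x : ℝ} (hx : 0 ≤ x) :
    besselWComplex ν x = besselW ν x := by
  have hsqrt : (2 / (π * x : ℂ)) ^ (1 / 2 : ℂ) = (Real.sqrt (2 / (π * x)) : ℂ) := by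
    rw [Real.sqrt_eq_rpow, Complex.ofReal_cpow (by positivity)]
    push_cast
    rfl
  rw [besselWComplex, besselW, hsqrt]
  rfl

lemma iteratedDeriv_besselW (ν j : ℕ) {x : ℝ} (hx : 0 < x) :
    iteratedDeriv j (besselW ν) x = iteratedDeriv j (fun t : ℝ ↦ besselWComplex ν t) x := by
  refine EventuallyEq.iteratedDeriv_eq j ?_
  filter_upwards [lt_mem_nhds hx] with t ht using (besselWComplex_ofReal ν ht.le).symm

lemma two_div_pi_mul_mem_slitPlane {z : ℂ} (hz : 0 < z.re) :
    2 / (π * z) ∈ Complex.slitPlane := by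
  have hnormSq : 0 < Complex.normSq z := Complex.normSq_pos.2 (by rintro rfl; exact hz.false)
  have hfactor : 2 / (π * z) = ((2 / π : ℝ) : ℂ) * z⁻¹ := by
    push_cast
    rw [← div_div, div_eq_mul_inv]
  refine Complex.mem_slitPlane_iff.2 (Or.inl ?_)
  rw [hfactor, Complex.re_ofReal_mul, Complex.inv_re]
  positivity

lemma norm_two_div_pi_mul_cpow_half (z : ℂ) :
    ‖(2 / (π * z)) ^ (1 / 2 : ℂ)‖ = (2 / π) ^ (1 / 2 : ℝ) * ‖z‖ ^ (-(1 / 2) : ℝ) := by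
  have hhalf : (1 / 2 : ℂ) = ((1 / 2 : ℝ) : ℂ) := by norm_num
  rw [hhalf, Complex.norm_cpow_real, norm_div, norm_mul, Complex.norm_two,
    Complex.norm_of_nonneg Real.pi_pos.le, ← div_div,
    Real.div_rpow (by positivity) (norm_nonneg z), Real.rpow_neg (norm_nonneg z), div_eq_mul_inv]

lemma neg_one_lt_re_sub_half (hν : -(1 / 2) < ν.re) : -1 < (ν - 1 / 2).re := by
  have hre : (ν - 1 / 2).re = ν.re - 1 / 2 := by simp
  linarith

lemma differentiableOn_besselWComplex (hν : -(1 / 2) < ν.re) (R : ℝ) :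
    DifferentiableOn ℂ (besselWComplex ν) (truncatedSector R) := by
  have hroot : DifferentiableOn ℂ (fun z : ℂ ↦ (2 / (π * z)) ^ (1 / 2 : ℂ))
      (truncatedSector R) := by
    intro z hz
    have hz0 : π * z ≠ 0 := mul_ne_zero (Complex.ofReal_ne_zero.2 Real.pi_ne_zero)
      (norm_pos_iff.1 (truncatedSector.norm_pos hz))
    have hbase : DifferentiableAt ℂ (fun w : ℂ ↦ 2 / (π * w)) z := by
      fun_prop (disch := exact hz0)
    exact (hbase.cpow_const
      (two_div_pi_mul_mem_slitPlane (truncatedSector.re_pos hz))).differentiableWithinAt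
  exact (hroot.const_mul _).mul (differentiableOn_integral_besselWIntegrand
    (neg_one_lt_re_sub_half hν) R)

lemma exists_norm_besselWComplex_le (hν : -(1 / 2) < ν.re) (R : ℝ) :
    ∃ B, ∀ z ∈ truncatedSector R, ‖besselWComplex ν z‖ ≤ B * ‖z‖ ^ (-(1 / 2) : ℝ) := by
  obtain ⟨B, hB⟩ := exists_norm_integral_besselWIntegrand_le (neg_one_lt_re_sub_half hν) R
  set c : ℂ := Complex.exp (Complex.I * (π * ν / 2 - π / 4)) / Complex.Gamma (ν + 1 / 2)
  refine ⟨‖c‖ * (2 / π) ^ (1 / 2 : ℝ) * B, fun z hz ↦ ?_⟩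
  calc ‖besselWComplex ν z‖
      = ‖c‖ * ((2 / π) ^ (1 / 2 : ℝ) * ‖z‖ ^ (-(1 / 2) : ℝ)) *
          ‖∫ y in Ioi (0 : ℝ), besselWIntegrand (ν - 1 / 2) z y‖ := by
        rw [besselWComplex, norm_mul, norm_mul, norm_two_div_pi_mul_cpow_half]
    _ ≤ ‖c‖ * ((2 / π) ^ (1 / 2 : ℝ) * ‖z‖ ^ (-(1 / 2) : ℝ)) * B := by
        gcongr
        exact hB z hz
    _ = ‖c‖ * (2 / π) ^ (1 / 2 : ℝ) * B * ‖z‖ ^ (-(1 / 2) : ℝ) := by ring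

theorem exists_norm_pow_mul_iteratedDeriv_besselWComplex_le (hν : -(1 / 2) < ν.re) (j : ℕ) {δ : ℝ}
    (hδ : 0 < δ) : ∃ C : ℝ, ∀ x : ℝ, δ ≤ x →
      ‖(x : ℂ) ^ j * iteratedDeriv j (fun t : ℝ ↦ besselWComplex ν t) x‖ ≤
        C * x ^ (-(1 / 2) : ℝ) := by
  obtain ⟨R, hR, hRδ⟩ : ∃ R : ℝ, 3 < R ∧ 2 < R * δ :=
    ((eventually_gt_atTop 3).and
      ((tendsto_id.atTop_mul_const hδ).eventually_gt_atTop 2)).exists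
  obtain ⟨B, hB⟩ := exists_norm_besselWComplex_le hν R
  have hdiff := differentiableOn_besselWComplex hν R
  refine ⟨j.factorial * 2 ^ j * 2 ^ |(-(1 / 2) : ℝ)| * B, fun x hx ↦ ?_⟩
  have hx0 : 0 < x := hδ.trans_le hx
  have hnorm : ‖(x : ℂ)‖ = x := Complex.norm_of_nonneg hx0.le
  have hball : closedBall (x : ℂ) (‖(x : ℂ)‖ / 2) ⊆ truncatedSector R := by
    rw [hnorm]
    exact truncatedSector.closedBall_subset hx0 hR (hRδ.trans_le (by gcongr))
  have hxS : (x : ℂ) ∈ truncatedSector R := hball (mem_closedBall_self (by positivity))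
  have hCauchy := norm_pow_smul_iteratedDeriv_le (Complex.ofReal_ne_zero.2 hx0.ne')
    (hdiff.diffContOnCl_ball hball) (fun w hw ↦ hB w (hball (sphere_subset_closedBall hw))) j
  rwa [smul_eq_mul, ← iteratedDeriv_comp_ofReal (truncatedSector.isOpen R) hdiff j hxS, hnorm]
    at hCauchy

theorem besselW_iteratedDeriv_bound_general (hν : -(1 / 2) < ν.re) (j : ℕ) {δ : ℝ} (hδ : 0 < δ) :
    ∃ C : ℝ, 0 < C ∧ ∀ x : ℝ, δ ≤ x →
      ‖(x : ℂ) ^ j * iteratedDeriv j (fun t : ℝ ↦ besselWComplex ν t) x‖ ≤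
        C * (1 + x) ^ (-(1 / 2) : ℝ) := by
  obtain ⟨C, hC⟩ := exists_norm_pow_mul_iteratedDeriv_besselWComplex_le hν j hδ
  refine ⟨max C 1 * (δ / (1 + δ)) ^ (-(1 / 2) : ℝ), by positivity, fun x hx ↦ ?_⟩
  have hx0 : 0 < x := hδ.trans_le hx
  calc ‖(x : ℂ) ^ j * iteratedDeriv j (fun t : ℝ ↦ besselWComplex ν t) x‖
      ≤ C * x ^ (-(1 / 2) : ℝ) := hC x hx
    _ ≤ max C 1 * ((δ / (1 + δ)) ^ (-(1 / 2) : ℝ) * (1 + x) ^ (-(1 / 2) : ℝ)) := by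
        gcongr ?_ * ?_
        · exact le_max_left C 1
        · exact rpow_le_mul_one_add_rpow hδ hx (by norm_num)
    _ = max C 1 * (δ / (1 + δ)) ^ (-(1 / 2) : ℝ) * (1 + x) ^ (-(1 / 2) : ℝ) :=
        (mul_assoc _ _ _).symm

end BesselW

/-- For every integer `ν ≥ 1` and every `j ≥ 0`, one has `x^j W_ν^{(j)}(x) ≪ (1+x)^{-1/2}`
for `x ≥ 1`. -/
theorem besselW_iteratedDeriv_bound (ν : ℕ) (hν : 1 ≤ ν) (j : ℕ) :
    ∃ C : ℝ, 0 < C ∧ ∀ x : ℝ, 1 ≤ x →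
      ‖(x : ℂ) ^ j * iteratedDeriv j (besselW ν) x‖ ≤ C * (1 + x) ^ (-(1 / 2 : ℝ)) := by
  have hν_re : -(1 / 2) < (ν : ℂ).re := by
    rw [Complex.natCast_re]
    linarith [ν.cast_nonneg (α := ℝ)]
  obtain ⟨C, hC, hbound⟩ := besselW_iteratedDeriv_bound_general hν_re j one_pos
  refine ⟨C, hC, fun x hx ↦ ?_⟩
  rw [iteratedDeriv_besselW ν j (one_pos.trans_le hx)]
  exact hbound x hx
end

section
/- There is an absolute constant C > 0 such that for all real numbers X, Y ≥ 1, every real T > 0, and every real R: ∫_{1/2}^{5/2} ∫_{1/2}^{5/2} 1_{2|xX − yY + R| > T} · |xX − yY + R|^{−1} dx dy ≤ (C / max{X,Y}) · (1 + log(1 + (X + Y + |R|)/T)), where 1_{2|xX − yY + R| > T} denotes the indicator of the condition 2|xX − yY + R| > T. -/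
open scoped Classical

/-!
The indicator cuts `|u|⁻¹` off near the origin, so the kernel is at most `3 / (T + |u|)`, whose
integral over `[-M, M]` is `6 * log (1 + M / T)`. Fixing one variable and substituting
`u = x * X - y * Y + R` in the one with the larger coefficient gains the factor `1 / max |X| |Y|`,
and the other variable ranges over an interval of length `2`.
-/

open MeasureTheory Set

theorem log_one_add_mul_le {k a : ℝ} (hk : 1 ≤ k) (ha : 0 ≤ a) :
    Real.log (1 + k * a) ≤ k - 1 + Real.log (1 + a) := calc
  Real.log (1 + k * a) ≤ Real.log (k * (1 + a)) :=
    Real.log_le_log (by positivity) (by linarith)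
  _ = Real.log k + Real.log (1 + a) := Real.log_mul (by positivity) (by positivity)
  _ ≤ k - 1 + Real.log (1 + a) := by
    gcongr
    exact Real.log_le_sub_one_of_pos (by positivity)

theorem continuous_inv_add_abs {T : ℝ} (hT : 0 < T) : Continuous fun u : ℝ => (T + |u|)⁻¹ :=
  Continuous.inv₀ (by fun_prop) fun u => by positivity

theorem integral_inv_add_abs {T M : ℝ} (hT : 0 < T) (hM : 0 ≤ M) :
    ∫ u in (-M)..M, (T + |u|)⁻¹ = 2 * Real.log (1 + M / T) := by
  have right_half : ∫ u in (0 : ℝ)..M, (T + |u|)⁻¹ = Real.log (1 + M / T) := calc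
    ∫ u in (0 : ℝ)..M, (T + |u|)⁻¹ = ∫ u in (0 : ℝ)..M, (T + u)⁻¹ :=
      intervalIntegral.integral_congr fun u hu => by
        rw [uIcc_of_le hM] at hu
        simp only [abs_of_nonneg hu.1]
    _ = ∫ v in (T + 0)..(T + M), v⁻¹ := intervalIntegral.integral_comp_add_left (·⁻¹) T
    _ = Real.log ((T + M) / T) := by
      rw [add_zero, integral_inv_of_pos hT (by positivity)]
    _ = Real.log (1 + M / T) := by rw [add_div, div_self hT.ne']
  have left_half : ∫ u in (-M)..0, (T + |u|)⁻¹ = ∫ u in (0 : ℝ)..M, (T + |u|)⁻¹ := by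
    simpa only [abs_neg, neg_zero] using
      (intervalIntegral.integral_comp_neg (a := 0) (b := M) fun u : ℝ => (T + |u|)⁻¹).symm
  have integrable (a b : ℝ) := (continuous_inv_add_abs hT).intervalIntegrable (μ := volume) a b
  rw [← intervalIntegral.integral_add_adjacent_intervals (integrable _ 0) (integrable 0 _),
    left_half, right_half, two_mul]

theorem setIntegral_comp_mul_add_le {f : ℝ → ℝ} {s t : Set ℝ} {c r : ℝ}
    (hs : MeasurableSet s) (ht : MeasurableSet t) (hf : ∀ u ∈ t, 0 ≤ f u)
    (hft : IntegrableOn f t) (hc : c ≠ 0) (hst : MapsTo (fun x => c * x + r) s t) :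
    ∫ x in s, f (c * x + r) ≤ |c|⁻¹ * ∫ u in t, f u := by
  have integrable_comp : Integrable fun x => t.indicator f (c * x + r) :=
    ((hft.integrable_indicator ht).comp_add_right r).comp_mul_left' hc
  calc ∫ x in s, f (c * x + r) = ∫ x in s, t.indicator f (c * x + r) :=
        setIntegral_congr_fun hs fun x hx => (indicator_of_mem (hst hx) f).symm
    _ ≤ ∫ x, t.indicator f (c * x + r) :=
        setIntegral_le_integral integrable_comp
          (.of_forall fun x => indicator_nonneg hf _)
    _ = |c|⁻¹ * ∫ u in t, f u := by
        rw [Measure.integral_comp_mul_left (fun u => t.indicator f (u + r)) c,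
          integral_add_right_eq_self, integral_indicator ht, smul_eq_mul, abs_inv]

/-- The kernel `1_{2|u| > T} · |u|⁻¹`, to be evaluated at `u = x * X - y * Y + R`. For `0 ≤ T` the
convention `0⁻¹ = 0` plays no role, since the condition excludes `u = 0`. -/
noncomputable def truncatedInv (T u : ℝ) : ℝ :=
  if T < 2 * |u| then |u|⁻¹ else 0

theorem truncatedInv_nonneg (T u : ℝ) : 0 ≤ truncatedInv T u := by
  unfold truncatedInv
  split_ifs <;> positivity

theorem measurable_truncatedInv (T : ℝ) : Measurable (truncatedInv T) :=
  Measurable.ite (measurableSet_lt (by fun_prop) (by fun_prop)) (by fun_prop) (by fun_prop)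

section

variable {T : ℝ}

theorem truncatedInv_le_mul_inv_add_abs (hT : 0 < T) (u : ℝ) :
    truncatedInv T u ≤ 3 * (T + |u|)⁻¹ := by
  unfold truncatedInv
  split_ifs with h
  · have hu : 0 < |u| := by linarith
    rw [← div_eq_mul_inv, inv_eq_one_div, div_le_div_iff₀ hu (by positivity)]
    linarith
  · positivity

theorem norm_truncatedInv_le (hT : 0 < T) (u : ℝ) : ‖truncatedInv T u‖ ≤ 3 * T⁻¹ := by
  rw [Real.norm_of_nonneg (truncatedInv_nonneg T u)]
  refine (truncatedInv_le_mul_inv_add_abs hT u).trans ?_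
  gcongr
  exact le_add_of_nonneg_right (abs_nonneg u)

theorem integrable_truncatedInv_comp (hT : 0 < T) {α : Type*} [MeasurableSpace α]
    {μ : Measure α} [IsFiniteMeasure μ] {g : α → ℝ} (hg : Measurable g) :
    Integrable (fun a => truncatedInv T (g a)) μ :=
  .of_bound ((measurable_truncatedInv T).comp hg).aestronglyMeasurable (3 * T⁻¹)
    (.of_forall fun a => norm_truncatedInv_le hT (g a))

theorem setIntegral_truncatedInv_le (hT : 0 < T) {M : ℝ} (hM : 0 ≤ M) :
    ∫ u in Icc (-M) M, truncatedInv T u ≤ 6 * Real.log (1 + M / T) := calc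
  ∫ u in Icc (-M) M, truncatedInv T u ≤ ∫ u in Icc (-M) M, 3 * (T + |u|)⁻¹ :=
    setIntegral_mono (integrable_truncatedInv_comp hT measurable_id)
      ((continuous_inv_add_abs hT).const_mul 3).integrableOn_Icc
      (truncatedInv_le_mul_inv_add_abs hT)
  _ = 6 * Real.log (1 + M / T) := by
    rw [integral_Icc_eq_integral_Ioc, ← intervalIntegral.integral_of_le (by linarith),
      intervalIntegral.integral_const_mul, integral_inv_add_abs hT hM]
    ring

theorem setIntegral_truncatedInv_affine_le (hT : 0 < T) {s : Set ℝ} {c r M : ℝ}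
    (hs : MeasurableSet s) (hc : c ≠ 0) (hM : 0 ≤ M) (hsM : ∀ x ∈ s, |c * x + r| ≤ M) :
    ∫ x in s, truncatedInv T (c * x + r) ≤ 6 / |c| * Real.log (1 + M / T) := calc
  ∫ x in s, truncatedInv T (c * x + r) ≤ |c|⁻¹ * ∫ u in Icc (-M) M, truncatedInv T u :=
    setIntegral_comp_mul_add_le hs measurableSet_Icc (fun u _ => truncatedInv_nonneg T u)
      (integrable_truncatedInv_comp hT measurable_id) hc fun x hx => abs_le.1 (hsM x hx)
  _ ≤ |c|⁻¹ * (6 * Real.log (1 + M / T)) := by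
    gcongr
    exact setIntegral_truncatedInv_le hT hM
  _ = 6 / |c| * Real.log (1 + M / T) := by ring

theorem integral_integral_truncatedInv_le (hT : 0 < T) {s t : Set ℝ} {X Y R M : ℝ}
    (hs : volume s ≠ ⊤) (ht : MeasurableSet t) (hM : 0 ≤ M)
    (hbound : ∀ x ∈ s, ∀ y ∈ t, |X * x + Y * y + R| ≤ M) (hY : Y ≠ 0) :
    ∫ x in s, ∫ y in t, truncatedInv T (X * x + Y * y + R) ≤
      6 / |Y| * Real.log (1 + M / T) * volume.real s := by
  refine (Real.le_norm_self _).trans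
    (norm_setIntegral_le_of_norm_le_const hs.lt_top fun x hx => ?_)
  rw [Real.norm_of_nonneg (integral_nonneg fun y => truncatedInv_nonneg T _)]
  have regroup (y : ℝ) : X * x + Y * y + R = Y * y + (X * x + R) := by ring
  simp only [regroup]
  exact setIntegral_truncatedInv_affine_le hT ht hY hM fun y hy => regroup y ▸ hbound x hx y hy

theorem integral_integral_truncatedInv_comm (hT : 0 < T) {s t : Set ℝ} (hs : volume s ≠ ⊤)
    (ht : volume t ≠ ⊤) (X Y R : ℝ) :
    ∫ x in s, ∫ y in t, truncatedInv T (X * x + Y * y + R) =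
      ∫ y in t, ∫ x in s, truncatedInv T (Y * y + X * x + R) := by
  have := isFiniteMeasure_restrict.2 hs
  have := isFiniteMeasure_restrict.2 ht
  rw [integral_integral_swap (integrable_truncatedInv_comp hT (by fun_prop))]
  simp only [add_comm]

theorem integral_integral_truncatedInv_le_div_max (hT : 0 < T) {s : Set ℝ}
    {X Y R M : ℝ} (hs : MeasurableSet s) (hsv : volume s ≠ ⊤) (hM : 0 ≤ M)
    (hbound : ∀ x ∈ s, ∀ y ∈ s, |X * x + Y * y + R| ≤ M) (hXY : X ≠ 0 ∨ Y ≠ 0) :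
    ∫ x in s, ∫ y in s, truncatedInv T (X * x + Y * y + R) ≤
      6 / max |X| |Y| * Real.log (1 + M / T) * volume.real s := by
  rcases le_total |X| |Y| with h | h
  · have hY : Y ≠ 0 := by
      rintro rfl
      simp_all
    rw [max_eq_right h]
    exact integral_integral_truncatedInv_le hT hsv hs hM hbound hY
  · have hX : X ≠ 0 := by
      rintro rfl
      simp_all
    rw [max_eq_left h, integral_integral_truncatedInv_comm hT hsv hsv]
    refine integral_integral_truncatedInv_le hT hsv hs hM (fun y hy x hx => ?_) hX
    rw [add_comm (Y * y)]
    exact hbound x hx y hy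

end

theorem abs_mul_add_mul_add_le {L x y : ℝ} (hL : 1 ≤ L) (hx : |x| ≤ L) (hy : |y| ≤ L)
    (X Y R : ℝ) : |X * x + Y * y + R| ≤ L * (|X| + |Y| + |R|) := calc
  |X * x + Y * y + R| ≤ |X| * |x| + |Y| * |y| + |R| := by
    simpa only [abs_mul] using abs_add_three (X * x) (Y * y) R
  _ ≤ |X| * L + |Y| * L + |R| * L := by
    gcongr
    exact le_mul_of_one_le_right (abs_nonneg R) hL
  _ = L * (|X| + |Y| + |R|) := by ring

theorem integral_indicator_bound_general {X Y T : ℝ} (hXY : X ≠ 0 ∨ Y ≠ 0) (hT : 0 < T)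
    (R : ℝ) :
    (∫ x in Icc (1 / 2 : ℝ) (5 / 2), ∫ y in Icc (1 / 2 : ℝ) (5 / 2),
      (if T < 2 * |x * X - y * Y + R| then |x * X - y * Y + R|⁻¹ else 0)) ≤
    (18 / max |X| |Y|) * (1 + Real.log (1 + (|X| + |Y| + |R|) / T)) := by
  set S := |X| + |Y| + |R|
  have abs_le_of_mem (x : ℝ) (hx : x ∈ Icc (1 / 2 : ℝ) (5 / 2)) : |x| ≤ 5 / 2 :=
    abs_le.2 ⟨by linarith [hx.1], hx.2⟩
  have log_le : Real.log (1 + 5 / 2 * S / T) ≤ 3 / 2 * (1 + Real.log (1 + S / T)) := by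
    have log_nonneg : 0 ≤ Real.log (1 + S / T) :=
      Real.log_nonneg (le_add_of_nonneg_right (by positivity))
    rw [mul_div_assoc]
    linarith [log_one_add_mul_le (k := 5 / 2) (a := S / T) (by norm_num) (by positivity)]
  calc _ = ∫ x in Icc (1 / 2 : ℝ) (5 / 2), ∫ y in Icc (1 / 2 : ℝ) (5 / 2),
        truncatedInv T (X * x + -Y * y + R) := by
        simp only [truncatedInv, mul_comm X, mul_comm (-Y), mul_neg, ← sub_eq_add_neg]
    _ ≤ 6 / max |X| |-Y| * Real.log (1 + 5 / 2 * S / T) *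
        volume.real (Icc (1 / 2 : ℝ) (5 / 2)) :=
      integral_integral_truncatedInv_le_div_max hT measurableSet_Icc measure_Icc_lt_top.ne
        (by positivity) (fun x hx y hy => by
          simpa only [abs_neg] using abs_mul_add_mul_add_le (by norm_num) (abs_le_of_mem x hx)
            (abs_le_of_mem y hy) X (-Y) R) (by simpa using hXY)
    _ = 12 / max |X| |Y| * Real.log (1 + 5 / 2 * S / T) := by
      rw [Real.volume_real_Icc_of_le (by norm_num), abs_neg]
      ring
    _ ≤ 12 / max |X| |Y| * (3 / 2 * (1 + Real.log (1 + S / T))) := by gcongr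
    _ = 18 / max |X| |Y| * (1 + Real.log (1 + S / T)) := by ring

/-- The elementary integral bound used to control the integral `I` arising in the
integration-by-parts analysis of the delta-method weight function. -/
theorem integral_indicator_bound :
    ∃ C : ℝ, 0 < C ∧ ∀ X Y : ℝ, 1 ≤ X → 1 ≤ Y → ∀ T : ℝ, 0 < T → ∀ R : ℝ,
      (∫ x in Set.Icc (1 / 2 : ℝ) (5 / 2), ∫ y in Set.Icc (1 / 2 : ℝ) (5 / 2),
        (if T < 2 * |x * X - y * Y + R| then |x * X - y * Y + R|⁻¹ else 0)) ≤
      (C / max X Y) * (1 + Real.log (1 + (X + Y + |R|) / T)) := by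
  refine ⟨18, by norm_num, fun X Y hX hY T hT R => ?_⟩
  simpa only [abs_of_nonneg (zero_le_one.trans hX), abs_of_nonneg (zero_le_one.trans hY)] using
    integral_indicator_bound_general (Y := Y) (.inl (zero_lt_one.trans_le hX).ne') hT R
end
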